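/- Probabilistic simulation is a precongruence for sequential composition: for probabilistic automata P, Q, R with disjoint state spaces, if P ≤ Q then P · R ≤ Q · R and R · P ≤ R · Q. -/

import Mathlib

open scoped ENNReal

namespace PCKA

/-- A probabilistic automaton over the (non-silent) action alphabet `α`, with state
space `σ`.  Transition labels are `Option α`, where `none` plays the role of the
silent action `τ`; `trans x a μ` means `x —a→ μ` where `μ` is a (countably
supported) probability distribution over states, `init` is the initial
distribution and `final` the set of final states. -/
structure PAut (α : Type) (σ : Type) where
  trans : σ → Option α → PMF σ → Prop
  init : PMF σ
  final : Set σ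

/-- The lifting `S̄ ⊆ D(X) × D(Y)` of a relation `S ⊆ X × D(Y)`: `μ S̄ ν` iff there
are weights `p n` summing to `1`, states `x n` and distributions `νs n` with
`μ = Σ_n p n · δ_{x n}`, `x n S νs n` for each `n`, and `ν = Σ_n p n · νs n`. -/
def Lift {X Y : Type} (S : X → PMF Y → Prop) (μ : PMF X) (ν : PMF Y) : Prop :=
  ∃ (p : ℕ → ℝ≥0∞) (x : ℕ → X) (νs : ℕ → PMF Y),
    (∑' n, p n) = 1 ∧
    (∀ s, μ s = ∑' n, p n * (PMF.pure (x n)) s) ∧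
    (∀ n, S (x n) (νs n)) ∧
    (∀ t, ν t = ∑' n, p n * (νs n) t)

/-- The double lifting `T̿ ⊆ D(X) × D(Z)` of a relation `T ⊆ X × Z`, via a weight
function `w`. -/
def DLift {X Z : Type} (T : X → Z → Prop) (μ : PMF X) (ψ : PMF Z) : Prop :=
  ∃ w : X → Z → ℝ≥0∞,
    (∀ x z, 0 < w x z → T x z) ∧
    (∀ x, (∑' z, w x z) = μ x) ∧
    (∀ z, (∑' x, w x z) = ψ z)

/-- Flattening `π : D(D(Y)) → D(Y)`, `π(ψ) = Σ_{ν} ψ(ν)·ν`. -/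
noncomputable def flat {Y : Type} (ψ : PMF (PMF Y)) : PMF Y := ψ.bind id

/-- Single transition step, with the τ-transitions extended by reflexivity
(`x —τ→ δ_x` is always allowed). -/
def step {α σ : Type} (P : PAut α σ) (a : Option α) (x : σ) (μ : PMF σ) : Prop :=
  P.trans x a μ ∨ (a = none ∧ μ = PMF.pure x)

/-- Weak internal moves `⇒`: the reflexive-transitive closure of the lifted
(extended) τ-transition relation on distributions. -/
def WeakTau {α σ : Type} (P : PAut α σ) : PMF σ → PMF σ → Prop :=
  Relation.ReflTransGen (Lift (step P none))

/-- Weak `a`-transition `μ ⇒^a μ'`: `μ ⇒ μ₁ —ā→ μ₂ ⇒ μ'`. -/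
def WeakStep {α σ : Type} (P : PAut α σ) (a : Option α) (μ μ' : PMF σ) : Prop :=
  ∃ μ₁ μ₂, WeakTau P μ μ₁ ∧ Lift (step P a) μ₁ μ₂ ∧ WeakTau P μ₂ μ'

/-- A probabilistic simulation from `P` to `Q` (Deng et al. style). -/
structure IsSimulation {α σ τ' : Type} (P : PAut α σ) (Q : PAut α τ')
    (S : σ → PMF τ' → Prop) : Prop where
  init : ∃ ν₀', WeakTau Q Q.init ν₀' ∧ Lift S P.init ν₀'
  step : ∀ x a μ', P.trans x a μ' → ∀ ν, S x ν →
    ∃ ν', WeakStep Q a ν ν' ∧ Lift S μ' ν'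
  final : ∀ x ν, x ∈ P.final → S x ν →
    ∃ ν', WeakTau Q ν ν' ∧ ∀ y ∈ ν'.support, y ∈ Q.final

/-- A probabilistic weak forward simulation from `P` to `Q` (Segala style). -/
structure IsWFSimulation {α σ τ' : Type} (P : PAut α σ) (Q : PAut α τ')
    (S : σ → PMF τ' → Prop) : Prop where
  init : ∃ ψ₀ : PMF (PMF τ'), DLift S P.init ψ₀ ∧ WeakTau Q Q.init (flat ψ₀)
  step : ∀ x a μ', P.trans x a μ' → ∀ ν, S x ν →
    ∃ ψ : PMF (PMF τ'), WeakStep Q a ν (flat ψ) ∧ DLift S μ' ψ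
  final : ∀ x ν, x ∈ P.final → S x ν →
    ∃ ψ : PMF (PMF τ'), (∀ ρ ∈ ψ.support, ∀ y ∈ ρ.support, y ∈ Q.final) ∧
      WeakTau Q ν (flat ψ)

/-- `P ≤ Q`: there exists a probabilistic simulation from `P` to `Q`. -/
def Sim {α σ τ' : Type} (P : PAut α σ) (Q : PAut α τ') : Prop :=
  ∃ S, IsSimulation P Q S

/-- Simulation equivalence `P ≡ Q`. -/
def SimEquiv {α σ τ' : Type} (P : PAut α σ) (Q : PAut α τ') : Prop :=
  Sim P Q ∧ Sim Q P

/-- Convex combination `p·μ + (1−p)·ν` of two distributions. -/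
noncomputable def mix {X : Type} (p : ℝ≥0∞) (hp : p ≤ 1) (μ ν : PMF X) : PMF X :=
  ⟨fun x => p * μ x + (1 - p) * ν x, by
    refine ENNReal.summable.hasSum_iff.mpr ?_
    rw [ENNReal.tsum_add, ENNReal.tsum_mul_left, ENNReal.tsum_mul_left,
      μ.tsum_coe, ν.tsum_coe, mul_one, mul_one, add_tsub_cancel_of_le hp]⟩

/-- Product distribution `μ × ν`, with `(μ × ν)(x,y) = μ(x)·ν(y)`. -/
noncomputable def pprod {X Y : Type} (μ : PMF X) (ν : PMF Y) : PMF (X × Y) :=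
  μ.bind fun x => ν.map fun y => (x, y)

/-- The skip automaton `1`: one state, no transitions, that state is final. -/
noncomputable def skip (α : Type) : PAut α Unit :=
  ⟨fun _ _ _ => False, PMF.pure (), Set.univ⟩

/-- The deadlock automaton `0`: one state, no transitions, no final state. -/
noncomputable def deadlock (α : Type) : PAut α Unit :=
  ⟨fun _ _ _ => False, PMF.pure (), ∅⟩

/-- Nondeterministic choice `P + Q`: disjoint union of the two automata (realised
by the sum type) plus a fresh initial state `z = none` with `z —τ→ μ₀` and
`z —τ→ ν₀`. -/
noncomputable def nchoice {α σ τ' : Type} (P : PAut α σ) (Q : PAut α τ') :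
    PAut α (Option (σ ⊕ τ')) where
  trans := fun s a μ =>
    match s with
    | none => a = none ∧
        (μ = P.init.map (fun x => some (Sum.inl x)) ∨
         μ = Q.init.map (fun y => some (Sum.inr y)))
    | some (Sum.inl x) => ∃ μ', P.trans x a μ' ∧ μ = μ'.map (fun x => some (Sum.inl x))
    | some (Sum.inr y) => ∃ ν', Q.trans y a ν' ∧ μ = ν'.map (fun y => some (Sum.inr y))
  init := PMF.pure none
  final := {s | (∃ x ∈ P.final, s = some (Sum.inl x)) ∨ (∃ y ∈ Q.final, s = some (Sum.inr y))}

/-- Sequential composition `P · Q`: disjoint union (realised by the sum type),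
with a τ-transition from each final state of `P` to the initial distribution of
`Q`; initial distribution that of `P`, final states those of `Q`. -/
noncomputable def pseq {α σ τ' : Type} (P : PAut α σ) (Q : PAut α τ') :
    PAut α (σ ⊕ τ') where
  trans := fun s a μ =>
    match s with
    | Sum.inl x =>
        (∃ μ', P.trans x a μ' ∧ μ = μ'.map Sum.inl) ∨
        (a = none ∧ x ∈ P.final ∧ μ = Q.init.map Sum.inr)
    | Sum.inr y => ∃ ν', Q.trans y a ν' ∧ μ = ν'.map Sum.inr
  init := P.init.map Sum.inl
  final := {s | ∃ y ∈ Q.final, s = Sum.inr y}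

/-- Kleene star `P*`: a fresh state `z = none` which is initial and the only
final state, with `z —τ→ μ₀` and `x —τ→ δ_z` for each final state `x` of `P`. -/
noncomputable def pstar {α σ : Type} (P : PAut α σ) : PAut α (Option σ) where
  trans := fun s a μ =>
    match s with
    | none => a = none ∧ μ = P.init.map some
    | some x =>
        (∃ μ', P.trans x a μ' ∧ μ = μ'.map some) ∨
        (a = none ∧ x ∈ P.final ∧ μ = PMF.pure none)
  init := PMF.pure none
  final := {none}

/-- Probabilistic choice `P ⊕_p Q`: disjoint union with initial distribution
`p·μ₀ + (1−p)·ν₀`. -/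
noncomputable def pchoice {α σ τ' : Type} (p : ℝ≥0∞) (hp : p ≤ 1)
    (P : PAut α σ) (Q : PAut α τ') : PAut α (σ ⊕ τ') where
  trans := fun s a μ =>
    match s with
    | Sum.inl x => ∃ μ', P.trans x a μ' ∧ μ = μ'.map Sum.inl
    | Sum.inr y => ∃ ν', Q.trans y a ν' ∧ μ = ν'.map Sum.inr
  init := mix p hp (P.init.map Sum.inl) (Q.init.map Sum.inr)
  final := {s | (∃ x ∈ P.final, s = Sum.inl x) ∨ (∃ y ∈ Q.final, s = Sum.inr y)}

/-- CSP-style parallel composition `P ∥_A Q` synchronising on the frame `A`: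
actions in `A` must be performed jointly, all other actions (including τ) are
interleaved. -/
noncomputable def par {α σ τ' : Type} (A : Set α) (P : PAut α σ) (Q : PAut α τ') :
    PAut α (σ × τ') where
  trans := fun s a μπ => ∃ μ ν, μπ = pprod μ ν ∧
    ((∃ b ∈ A, a = some b ∧ P.trans s.1 a μ ∧ Q.trans s.2 a ν) ∨
     ((∀ b ∈ A, a ≠ some b) ∧ P.trans s.1 a μ ∧ ν = PMF.pure s.2) ∨
     ((∀ b ∈ A, a ≠ some b) ∧ Q.trans s.2 a ν ∧ μ = PMF.pure s.1))
  init := pprod P.init Q.init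
  final := {s | s.1 ∈ P.final ∧ s.2 ∈ Q.final}

/-!
Both claims are instances of one: `P · P' ≤ Q · Q'` whenever `P ≤ Q` and `P' ≤ Q'`. Given
simulations `S` and `T` for the two components, the composite is simulated by their disjoint
union: `x S ν` and `y T ν` are transported along the inclusions of states, which preserve
transitions and therefore weak moves. The only new transition, `x —τ→ μ₀'` from a final `x`, is
matched in three stages: `ν` weakly reaches a distribution on final states of `Q`, all of these
states move to the initial distribution of `Q'` at once, and the latter weakly reaches a
distribution which `T` relates to `μ₀'`.
-/

section Lift

variable {X Y X' Y' : Type} {S : X → PMF Y → Prop}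

theorem lift_iff_exists_map_bind {μ : PMF X} {ν : PMF Y} :
    Lift S μ ν ↔ ∃ (p : PMF ℕ) (x : ℕ → X) (νs : ℕ → PMF Y),
      μ = p.map x ∧ (∀ n, S (x n) (νs n)) ∧ ν = p.bind νs := by
  constructor
  · rintro ⟨p, x, νs, hp, hμ, hS, hν⟩
    exact ⟨⟨p, ENNReal.summable.hasSum_iff.mpr hp⟩, x, νs, PMF.ext hμ, hS, PMF.ext hν⟩
  · rintro ⟨p, x, νs, rfl, hS, rfl⟩
    exact ⟨p, x, νs, p.tsum_coe, fun _ => rfl, hS, fun _ => rfl⟩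

theorem Lift.map {S' : X' → PMF Y' → Prop} {f : X → X'} {g : Y → Y'} {μ : PMF X} {ν : PMF Y}
    (hl : Lift S μ ν) (hS : ∀ x ν, S x ν → S' (f x) (ν.map g)) :
    Lift S' (μ.map f) (ν.map g) := by
  rw [lift_iff_exists_map_bind] at hl ⊢
  obtain ⟨p, x, νs, rfl, hx, rfl⟩ := hl
  exact ⟨p, f ∘ x, fun n => (νs n).map g, PMF.map_comp .., fun n => hS _ _ (hx n),
    PMF.map_bind ..⟩

theorem exists_map_nat_eq {Z : Type*} (μ : PMF Z) :
    ∃ (p : PMF ℕ) (x : ℕ → Z), p.map x = μ ∧ ∀ n, x n ∈ μ.support := by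
  obtain ⟨x, hx⟩ := μ.support_countable.exists_eq_range μ.support_nonempty
  have x_invFun : ∀ z ∈ μ.support, x (Function.invFun x z) = z := fun z hz =>
    Function.invFun_eq (hx ▸ hz : z ∈ Set.range x)
  refine ⟨μ.map (Function.invFun x), x, ?_, fun n => hx ▸ Set.mem_range_self n⟩
  calc (μ.map (Function.invFun x)).map x
      = μ.bindOnSupport fun z _ => PMF.pure (x (Function.invFun x z)) := by
        rw [PMF.map_comp, PMF.bindOnSupport_eq_bind]
        rfl
    _ = μ.bindOnSupport fun z _ => PMF.pure z := by
        congr 1 with z hz : 2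
        rw [x_invFun z hz]
    _ = μ := μ.bindOnSupport_pure

theorem lift_bind {μ : PMF X} {f : X → PMF Y} (hf : ∀ x ∈ μ.support, S x (f x)) :
    Lift S μ (μ.bind f) := by
  obtain ⟨p, x, hp, hx⟩ := exists_map_nat_eq μ
  refine lift_iff_exists_map_bind.mpr ⟨p, x, f ∘ x, hp.symm, fun n => hf _ (hx n), ?_⟩
  rw [← PMF.bind_map, hp]

theorem lift_const {μ : PMF X} {ν : PMF Y} (h : ∀ x ∈ μ.support, S x ν) : Lift S μ ν := by
  simpa only [PMF.bind_const] using lift_bind h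

theorem lift_pure {x : X} {ν : PMF Y} (h : S x ν) : Lift S (PMF.pure x) ν :=
  lift_const fun _ hy => (PMF.mem_support_pure_iff _ _).mp hy ▸ h

theorem lift_eq_pure_self (μ : PMF X) : Lift (fun x ν => ν = PMF.pure x) μ μ := by
  simpa only [PMF.bind_pure] using
    lift_bind (S := fun x ν => ν = PMF.pure x) (μ := μ) fun _ _ => rfl

end Lift

/-- A map of states along which every transition `x —a→ μ` of `P` is carried to a transition
of `Q`. Initial distributions and final states are not constrained, so that both inclusions
into a sequential composition qualify. -/
def PreservesTrans {α σ τ : Type} (P : PAut α σ) (Q : PAut α τ) (f : σ → τ) : Prop :=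
  ∀ ⦃x a μ⦄, P.trans x a μ → Q.trans (f x) a (μ.map f)

namespace PreservesTrans

variable {α σ τ : Type} {P : PAut α σ} {Q : PAut α τ} {f : σ → τ} {a : Option α} {μ ν : PMF σ}

theorem step (hf : PreservesTrans P Q f) {x : σ} : step P a x μ → step Q a (f x) (μ.map f)
  | .inl h => .inl (hf h)
  | .inr ⟨ha, hμ⟩ => .inr ⟨ha, by rw [hμ, PMF.pure_map]⟩

theorem lift_step (hf : PreservesTrans P Q f) (h : Lift (PCKA.step P a) μ ν) :
    Lift (PCKA.step Q a) (μ.map f) (ν.map f) :=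
  h.map fun _ _ => hf.step

theorem weakTau (hf : PreservesTrans P Q f) (h : WeakTau P μ ν) :
    WeakTau Q (μ.map f) (ν.map f) :=
  Relation.ReflTransGen.lift (PMF.map f) (fun _ _ => hf.lift_step) _ _ h

theorem weakStep (hf : PreservesTrans P Q f) : WeakStep P a μ ν → WeakStep Q a (μ.map f) (ν.map f)
  | ⟨_, _, h₁, h₂, h₃⟩ => ⟨_, _, hf.weakTau h₁, hf.lift_step h₂, hf.weakTau h₃⟩

end PreservesTrans

theorem weakStep_pure {α σ : Type} {P : PAut α σ} {a : Option α} {x : σ} {μ : PMF σ}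
    (h : P.trans x a μ) : WeakStep P a (PMF.pure x) μ :=
  ⟨_, _, .refl, lift_pure (.inl h), .refl⟩

theorem isSimulation_eq_pure {α σ : Type} (P : PAut α σ) :
    IsSimulation P P fun x ν => ν = PMF.pure x where
  init := ⟨P.init, .refl, lift_eq_pure_self _⟩
  step := by
    rintro x a μ hμ _ rfl
    exact ⟨μ, weakStep_pure hμ, lift_eq_pure_self μ⟩
  final := by
    rintro x _ hx rfl
    exact ⟨_, .refl, fun _ hy => (PMF.mem_support_pure_iff _ _).mp hy ▸ hx⟩

theorem Sim.refl {α σ : Type} (P : PAut α σ) : Sim P P :=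
  ⟨_, isSimulation_eq_pure P⟩

section pseq

variable {α σ τ : Type} (P : PAut α σ) (Q : PAut α τ)

theorem preservesTrans_pseq_inl : PreservesTrans P (pseq P Q) Sum.inl :=
  fun _ _ μ h => .inl ⟨μ, h, rfl⟩

theorem preservesTrans_pseq_inr : PreservesTrans Q (pseq P Q) Sum.inr :=
  fun _ _ μ h => ⟨μ, h, rfl⟩

theorem lift_step_pseq_of_support_final {P : PAut α σ} {μ : PMF σ}
    (hμ : ∀ x ∈ μ.support, x ∈ P.final) :
    Lift (step (pseq P Q) none) (μ.map Sum.inl) (Q.init.map Sum.inr) := by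
  refine lift_const fun z hz => ?_
  obtain ⟨x, hx, rfl⟩ := (PMF.mem_support_map_iff ..).mp hz
  exact .inl (.inr ⟨rfl, hμ x hx, rfl⟩)

end pseq

/-- The disjoint union of `S` and `T`, as a relation between states and distributions of two
sequential compositions: the simulation which shows that `pseq` is monotone. -/
inductive SumRel {X X' Y Y' : Type} (S : X → PMF Y → Prop) (T : X' → PMF Y' → Prop) :
    X ⊕ X' → PMF (Y ⊕ Y') → Prop
  | inl {x : X} {ν : PMF Y} (h : S x ν) : SumRel S T (.inl x) (ν.map .inl)
  | inr {x : X'} {ν : PMF Y'} (h : T x ν) : SumRel S T (.inr x) (ν.map .inr)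

section Monotone

variable {α σ₁ σ₂ τ₁ τ₂ : Type} {P : PAut α σ₁} {P' : PAut α σ₂} {Q : PAut α τ₁}
  {Q' : PAut α τ₂} {S : σ₁ → PMF τ₁ → Prop} {T : σ₂ → PMF τ₂ → Prop}

theorem IsSimulation.exists_weakStep_pseq_of_final (hS : IsSimulation P Q S)
    (hT : IsSimulation P' Q' T) {x : σ₁} {ν : PMF τ₁} (hx : x ∈ P.final) (hν : S x ν) :
    ∃ ν', WeakStep (pseq Q Q') none (ν.map Sum.inl) ν' ∧
      Lift (SumRel S T) (P'.init.map Sum.inr) ν' := by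
  obtain ⟨ν₁, hνν₁, hν₁⟩ := hS.final x ν hx hν
  obtain ⟨ν₂, hν₂, hT₀⟩ := hT.init
  exact ⟨ν₂.map Sum.inr,
    ⟨_, _, (preservesTrans_pseq_inl Q Q').weakTau hνν₁, lift_step_pseq_of_support_final Q' hν₁,
      (preservesTrans_pseq_inr Q Q').weakTau hν₂⟩,
    hT₀.map fun _ _ => .inr⟩

theorem IsSimulation.pseq (hS : IsSimulation P Q S) (hT : IsSimulation P' Q' T) :
    IsSimulation (pseq P P') (pseq Q Q') (SumRel S T) where
  init := by
    obtain ⟨ν, hν, hlift⟩ := hS.init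
    exact ⟨_, (preservesTrans_pseq_inl Q Q').weakTau hν, hlift.map fun _ _ => .inl⟩
  step := by
    rintro _ a _ htrans _ (hν | hν)
    · obtain ⟨μ, hμ, rfl⟩ | ⟨rfl, hx, rfl⟩ := htrans
      · obtain ⟨ν', hνν', hlift⟩ := hS.step _ _ _ hμ _ hν
        exact ⟨_, (preservesTrans_pseq_inl Q Q').weakStep hνν', hlift.map fun _ _ => .inl⟩
      · exact hS.exists_weakStep_pseq_of_final hT hx hν
    · obtain ⟨μ, hμ, rfl⟩ := htrans
      obtain ⟨ν', hνν', hlift⟩ := hT.step _ _ _ hμ _ hν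
      exact ⟨_, (preservesTrans_pseq_inr Q Q').weakStep hνν', hlift.map fun _ _ => .inr⟩
  final := by
    rintro _ _ ⟨y, hy, rfl⟩ (_ | hν)
    obtain ⟨ν', hνν', hfinal⟩ := hT.final _ _ hy hν
    refine ⟨_, (preservesTrans_pseq_inr Q Q').weakTau hνν', fun z hz => ?_⟩
    obtain ⟨y', hy', rfl⟩ := (PMF.mem_support_map_iff ..).mp hz
    exact ⟨y', hfinal y' hy', rfl⟩

theorem Sim.pseq : Sim P Q → Sim P' Q' → Sim (pseq P P') (pseq Q Q')
  | ⟨_, hS⟩, ⟨_, hT⟩ => ⟨_, hS.pseq hT⟩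

end Monotone

/-- simulation is a precongruence for sequential composition:
if `P ≤ Q` then `P · R ≤ Q · R` and `R · P ≤ R · Q`. -/
theorem sim_precongruence_seq {α σ₁ σ₂ σ₃ : Type}
    (P : PAut α σ₁) (Q : PAut α σ₂) (R : PAut α σ₃) (h : Sim P Q) :
    Sim (pseq P R) (pseq Q R) ∧ Sim (pseq R P) (pseq R Q) :=
  ⟨h.pseq (.refl R), (Sim.refl R).pseq h⟩

end PCKA
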